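/- Let n > 1. Under the hypotheses below (μ, ν symmetrically suitable Borel probability measures on Sⁿ, γ an optimal coupling of (μ, ν) for the quadratic cost, and t⁺, t⁻ the Gangbo–McCann outer and inner maps), define the bivalent target set T₂ := t⁻(S₂). Then t⁺ is locally Hölder continuous with exponent 1/(4n−1) on the set (t⁺)⁻¹(T₂), i.e. on the preimage under t⁺ of the set where the image of t⁺ is bivalent. -/

import Mathlib

/-!
The estimate holds for all pairs of nearby points of the sphere, and combines the monotonicity of
optimal plans with a strict convexity property of the sphere in the spirit of Loeper and
Ma–Trudinger–Wang.

Optimality makes the support of `γ` pairwise monotone: `⟪p₁ - q₁, p₂ - q₂⟫ ≥ 0`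
(`monotone_of_optimal`). The point `(x, t⁺ x)` is monotone against the support for every `x` of
the sphere, even if `x` is only sent to `t⁻ x`: moving the image in the direction of the outer
normal `x` only improves the inequality (`tPlus_monotone`).

Fix `x₀, x₁`, put `yᵢ = t⁺ xᵢ`, `δ = ‖x₁ - x₀‖`, `D = ‖y₁ - y₀‖`, and choose a unit vector `e`
within `5 δ` of both `xᵢ` with `⟪e, yᵢ⟫ ≥ 0` (`exists_pole`). Lifting the chord from `y₀` to `y₁`
in the direction `e` up to the sphere gives an arc (`arcPoint`), whose middle half has length at
least `D / 10` and lies above the chord by at least `D² / 16`. The weighted sum of the monotonicity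
inequalities at `(x₀, y₀)` and `(x₁, y₁)` reads
`⟪x - x_θ, y - z_θ⟫ + θ (1 - θ) ⟪x₁ - x₀, y₁ - y₀⟫ ≥ 0`, with `x_θ`, `z_θ` on the two chords.
Replacing `z_θ` by the arc point creates a term of order `-D² ‖x - e‖²`, so that every `y` within
`η ≈ D² r` of the middle half of the arc can only be reached from the cap of radius
`r = 20 √(δ / D)` around `e` (`dist_lt_of_near_arc`).

Hence `ν` of the `η`-tube around the arc is at most `μ` of that cap. Packing disjoint balls along
the arc (`packing_measure_le`) and the two-sided density bounds turn this into
`D ηⁿ⁻¹ ≲ rⁿ`, which is `D⁴ⁿ⁻¹ ≲ δ` (`pow_norm_tPlus_sub_le`).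
-/

open MeasureTheory Metric Set
open scoped RealInnerProductSpace ENNReal NNReal

noncomputable section

/-- Euclidean space `ℝ^{n+1}`. -/
abbrev Euc (n : ℕ) := EuclideanSpace ℝ (Fin (n + 1))

/-- The unit sphere `Sⁿ ⊂ ℝ^{n+1}`. -/
def unitSphere (n : ℕ) : Set (Euc n) := Metric.sphere (0 : Euc n) 1

/-- `σ`: the `n`-dimensional Hausdorff measure restricted to the unit sphere. -/
def sphereMeasure (n : ℕ) : Measure (Euc n) :=
  (μH[(n : ℝ)]).restrict (unitSphere n)

/-- Borel probability measures `μ, ν` on `Sⁿ` are symmetrically suitable if there is `ε > 0`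
with `ε·σ ≤ μ ≤ ε⁻¹·σ` and `ε·σ ≤ ν ≤ ε⁻¹·σ`. -/
def SymmetricallySuitable (n : ℕ) (μ ν : Measure (Euc n)) : Prop :=
  IsProbabilityMeasure μ ∧ IsProbabilityMeasure ν ∧
  ∃ ε : ℝ≥0∞, 0 < ε ∧ ε ≠ ⊤ ∧
    ε • sphereMeasure n ≤ μ ∧ μ ≤ ε⁻¹ • sphereMeasure n ∧
    ε • sphereMeasure n ≤ ν ∧ ν ≤ ε⁻¹ • sphereMeasure n

/-- A coupling of `(μ, ν)`: a Borel probability measure on the product whose marginals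
are `μ` and `ν`. -/
def IsCoupling (n : ℕ) (μ ν : Measure (Euc n)) (γ : Measure (Euc n × Euc n)) : Prop :=
  IsProbabilityMeasure γ ∧ γ.map Prod.fst = μ ∧ γ.map Prod.snd = ν

/-- The quadratic transport cost of a plan `γ`. -/
def transportCost (n : ℕ) (γ : Measure (Euc n × Euc n)) : ℝ≥0∞ :=
  ∫⁻ p, ENNReal.ofReal (‖p.1 - p.2‖ ^ 2) ∂γ

/-- `γ` is an optimal coupling of `(μ, ν)` for the quadratic cost. -/
def IsOptimalCoupling (n : ℕ) (μ ν : Measure (Euc n)) (γ : Measure (Euc n × Euc n)) : Prop :=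
  IsCoupling n μ ν γ ∧ ∀ γ' : Measure (Euc n × Euc n), IsCoupling n μ ν γ' →
    transportCost n γ ≤ transportCost n γ'

/-- The Gangbo–McCann structure: `t⁺ : Sⁿ → Sⁿ` is a homeomorphism (a continuous bijection of
the compact sphere) and `t⁻ : Sⁿ → Sⁿ` is continuous, `γ` is concentrated on the union of their
graphs, `t⁺(x) = t⁻(x)` implies `x·t⁺(x) ≥ 0`, and at every bivalent point
`t⁺(x) − t⁻(x) = λ(x)x` with `λ(x) > 0`, `x·t⁺(x) > 0` and `x·t⁻(x) < 0`. -/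
def GangboMcCannMaps (n : ℕ) (γ : Measure (Euc n × Euc n))
    (tp tm : Euc n → Euc n) : Prop :=
  ContinuousOn tp (unitSphere n) ∧ BijOn tp (unitSphere n) (unitSphere n) ∧
  ContinuousOn tm (unitSphere n) ∧ MapsTo tm (unitSphere n) (unitSphere n) ∧
  γ {p : Euc n × Euc n | p.2 ≠ tp p.1 ∧ p.2 ≠ tm p.1} = 0 ∧
  (∀ x ∈ unitSphere n, tp x = tm x → 0 ≤ ⟪x, tp x⟫) ∧
  (∀ x ∈ unitSphere n, tp x ≠ tm x →
    (∃ l : ℝ, 0 < l ∧ tp x - tm x = l • x) ∧ 0 < ⟪x, tp x⟫ ∧ ⟪x, tm x⟫ < 0)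

/-- `f` is locally Hölder with exponent `α` on `A`: every point of `A` has a relative
neighborhood `U ⊆ A` and a constant `C` with `|f x₁ − f x₀| ≤ C|x₁ − x₀|^α` on `U`. -/
def LocallyHolderOn (n : ℕ) (f : Euc n → Euc n) (A : Set (Euc n)) (α : ℝ) : Prop :=
  ∀ x ∈ A, ∃ U ∈ nhdsWithin x A, U ⊆ A ∧ ∃ C : ℝ,
    ∀ x₀ ∈ U, ∀ x₁ ∈ U, ‖f x₁ - f x₀‖ ≤ C * ‖x₁ - x₀‖ ^ α

/-! ### Monotonicity of the support of an optimal plan -/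

/-- The support of an optimal plan is monotone. If the inequality failed at `p, q`, exchanging the
targets of the mass that `γ` puts near `p` and near `q` would lower the cost: with `U`, `V` small
neighbourhoods and `ρ = γ|_U × γ|_V`, the average `τ` of the two projections of `ρ` is a part of
`γ`, and replacing it by the plan `τ'` with swapped targets keeps the marginals. -/
lemma monotone_of_optimal {n : ℕ} {μ ν : Measure (Euc n)} {γ : Measure (Euc n × Euc n)}
    (hopt : IsOptimalCoupling n μ ν γ) (hfin : transportCost n γ ≠ ⊤)
    {p q : Euc n × Euc n} (hp : p ∈ γ.support) (hq : q ∈ γ.support) :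
    0 ≤ ⟪p.1 - q.1, p.2 - q.2⟫ := by
  by_contra hneg
  push Not at hneg
  obtain ⟨⟨hprob, hfst, hsnd⟩, hmin⟩ := hopt
  set s : ℝ := -⟪p.1 - q.1, p.2 - q.2⟫ with hs
  have hspos : 0 < s := by linarith
  -- The gain in cost when the targets of two pairs are exchanged.
  let F : (Euc n × Euc n) × (Euc n × Euc n) → ℝ := fun w =>
    ‖w.1.1 - w.1.2‖ ^ 2 + ‖w.2.1 - w.2.2‖ ^ 2
      - ‖w.1.1 - w.2.2‖ ^ 2 - ‖w.2.1 - w.1.2‖ ^ 2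
  have hFcont : Continuous F := by fun_prop
  have hFpq : s < F (p, q) := by
    have : F (p, q) = 2 * s := by
      simp only [F, hs, ← real_inner_self_eq_norm_sq, inner_sub_left, inner_sub_right]
      rw [real_inner_comm p.1 p.2, real_inner_comm q.1 q.2, real_inner_comm q.2 p.1,
        real_inner_comm q.1 p.2]
      ring
    linarith
  have hnhds : {w | s < F w} ∈ nhds (p, q) :=
    (isOpen_lt continuous_const hFcont).mem_nhds hFpq
  rw [nhds_prod_eq, Filter.mem_prod_iff] at hnhds
  obtain ⟨U', hU', V', hV', hUV'⟩ := hnhds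
  obtain ⟨U, hUU', hUo, hpU⟩ := _root_.mem_nhds_iff.1 hU'
  obtain ⟨V, hVV', hVo, hqV⟩ := _root_.mem_nhds_iff.1 hV'
  have hα : 0 < γ U := (Measure.mem_support_iff_forall p).1 hp U (hUo.mem_nhds hpU)
  have hβ : 0 < γ V := (Measure.mem_support_iff_forall q).1 hq V (hVo.mem_nhds hqV)
  set ρ : Measure ((Euc n × Euc n) × (Euc n × Euc n)) := (γ.restrict U).prod (γ.restrict V)
    with hρ
  have hρ_ae : ∀ᵐ w ∂ρ, s < F w := by
    have : ρ = (γ.prod γ).restrict (U ×ˢ V) := Measure.prod_restrict U V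
    rw [this]
    refine (ae_restrict_iff' (hUo.measurableSet.prod hVo.measurableSet)).2 (.of_forall ?_)
    intro w hw
    exact hUV' ⟨hUU' hw.1, hVV' hw.2⟩
  have hρ_univ : ρ univ = γ U * γ V := by
    rw [hρ, ← univ_prod_univ, Measure.prod_prod]; simp
  let A : (Euc n × Euc n) × (Euc n × Euc n) → Euc n × Euc n := fun w => (w.1.1, w.2.2)
  let B : (Euc n × Euc n) × (Euc n × Euc n) → Euc n × Euc n := fun w => (w.2.1, w.1.2)
  have hA : Measurable A := by fun_prop
  have hB : Measurable B := by fun_prop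
  set τ : Measure (Euc n × Euc n) := (2⁻¹ : ℝ≥0∞) • (ρ.map Prod.fst + ρ.map Prod.snd) with hτ
  set τ' : Measure (Euc n × Euc n) := (2⁻¹ : ℝ≥0∞) • (ρ.map A + ρ.map B) with hτ'
  have hτle : τ ≤ γ := by
    have h1 : ρ.map Prod.fst ≤ γ := by
      rw [hρ, Measure.map_fst_prod]
      calc (γ.restrict V) univ • γ.restrict U ≤ (1 : ℝ≥0∞) • γ.restrict U := by
            gcongr; simpa using prob_le_one
        _ ≤ γ := by rw [one_smul]; exact Measure.restrict_le_self
    have h2 : ρ.map Prod.snd ≤ γ := by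
      rw [hρ, Measure.map_snd_prod]
      calc (γ.restrict U) univ • γ.restrict V ≤ (1 : ℝ≥0∞) • γ.restrict V := by
            gcongr; simpa using prob_le_one
        _ ≤ γ := by rw [one_smul]; exact Measure.restrict_le_self
    calc τ ≤ (2⁻¹ : ℝ≥0∞) • (γ + γ) := by rw [hτ]; gcongr
      _ = γ := by rw [← two_smul ℝ≥0∞ γ, smul_smul, ENNReal.inv_mul_cancel (by simp) (by simp),
                    one_smul]
  have : IsFiniteMeasure τ := isFiniteMeasure_of_le γ hτle
  have hγ : γ - τ + τ = γ := Measure.sub_add_cancel_of_le hτle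
  have hm1 : (τ'.map Prod.fst) = τ.map Prod.fst := by
    simp only [hτ, hτ', Measure.map_smul, Measure.map_add _ _ measurable_fst]
    rw [Measure.map_map measurable_fst hA, Measure.map_map measurable_fst hB,
      Measure.map_map measurable_fst measurable_fst, Measure.map_map measurable_fst measurable_snd]
    rfl
  have hm2 : (τ'.map Prod.snd) = τ.map Prod.snd := by
    simp only [hτ, hτ', Measure.map_smul, Measure.map_add _ _ measurable_snd]
    rw [Measure.map_map measurable_snd hA, Measure.map_map measurable_snd hB,
      Measure.map_map measurable_snd measurable_fst, Measure.map_map measurable_snd measurable_snd,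
      add_comm (ρ.map (Prod.snd ∘ A))]
    rfl
  have hf' : (γ - τ + τ').map Prod.fst = μ := by
    rw [Measure.map_add _ _ measurable_fst, hm1, ← Measure.map_add _ _ measurable_fst, hγ, hfst]
  have hs' : (γ - τ + τ').map Prod.snd = ν := by
    rw [Measure.map_add _ _ measurable_snd, hm2, ← Measure.map_add _ _ measurable_snd, hγ, hsnd]
  have hprob' : IsProbabilityMeasure (γ - τ + τ') := by
    constructor
    have h1 : (γ - τ + τ').map Prod.fst univ = γ.map Prod.fst univ := by rw [hf', hfst]
    rwa [Measure.map_apply measurable_fst .univ, Measure.map_apply measurable_fst .univ,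
      preimage_univ, measure_univ (μ := γ)] at h1
  have hcost := hmin _ ⟨hprob', hf', hs'⟩
  let c : Euc n × Euc n → ℝ≥0∞ := fun p => ENNReal.ofReal (‖p.1 - p.2‖ ^ 2)
  have hc : Measurable c := by fun_prop
  have hsplit : ∫⁻ p, c p ∂γ = ∫⁻ p, c p ∂(γ - τ) + ∫⁻ p, c p ∂τ := by
    rw [← lintegral_add_measure, hγ]
  have hcost' : ∫⁻ p, c p ∂(γ - τ) + ∫⁻ p, c p ∂τ ≤ ∫⁻ p, c p ∂(γ - τ) + ∫⁻ p, c p ∂τ' := by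
    rw [← hsplit, ← lintegral_add_measure]; exact hcost
  have hfin' : ∫⁻ p, c p ∂(γ - τ) + ∫⁻ p, c p ∂τ ≠ ⊤ := by rw [← hsplit]; exact hfin
  have hle : ∫⁻ p, c p ∂τ ≤ ∫⁻ p, c p ∂τ' :=
    (ENNReal.add_le_add_iff_left (fun h => hfin' (by rw [h]; simp))).1 hcost'
  have e1 : ∫⁻ p, c p ∂τ = 2⁻¹ * ∫⁻ w, (c w.1 + c w.2) ∂ρ := by
    rw [hτ, lintegral_smul_measure, lintegral_add_measure, lintegral_map hc measurable_fst,
      lintegral_map hc measurable_snd, ← lintegral_add_left (by fun_prop)]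
    rfl
  have e2 : ∫⁻ p, c p ∂τ' = 2⁻¹ * ∫⁻ w, (c (A w) + c (B w)) ∂ρ := by
    rw [hτ', lintegral_smul_measure, lintegral_add_measure, lintegral_map hc hA,
      lintegral_map hc hB, ← lintegral_add_left (by fun_prop)]
    rfl
  have hkey : ∫⁻ w, (c (A w) + c (B w)) ∂ρ + ENNReal.ofReal s * ρ univ
      ≤ ∫⁻ w, (c w.1 + c w.2) ∂ρ := by
    rw [← lintegral_const, ← lintegral_add_right _ measurable_const]
    refine lintegral_mono_ae ?_
    filter_upwards [hρ_ae] with w hw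
    simp only [c, A, B]
    rw [← ENNReal.ofReal_add (by positivity) (by positivity),
      ← ENNReal.ofReal_add (by positivity) hspos.le,
      ← ENNReal.ofReal_add (by positivity) (by positivity)]
    apply ENNReal.ofReal_le_ofReal
    simp only [F] at hw
    linarith
  rw [e1, e2] at hle
  have hle2 : ∫⁻ w, (c w.1 + c w.2) ∂ρ ≤ ∫⁻ w, (c (A w) + c (B w)) ∂ρ :=
    (ENNReal.mul_le_mul_iff_right (by simp) (by simp)).1 hle
  have hne : ∫⁻ w, (c w.1 + c w.2) ∂ρ ≠ ⊤ := by
    intro h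
    apply hfin'
    rw [e1, h]
    simp
  have hne2 : ∫⁻ w, (c (A w) + c (B w)) ∂ρ ≠ ⊤ := by
    intro h
    rw [h] at hkey
    exact hne (top_le_iff.1 (le_trans (by simp) hkey))
  have h0 : ENNReal.ofReal s * ρ univ ≤ 0 := by
    refine (ENNReal.add_le_add_iff_left hne2).1 ?_
    rw [add_zero]
    exact hkey.trans hle2
  have h1 : 0 < ENNReal.ofReal s * ρ univ := by
    rw [hρ_univ]
    exact ENNReal.mul_pos (ENNReal.ofReal_pos.2 hspos).ne' (ENNReal.mul_pos hα.ne' hβ.ne').ne'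
  exact absurd h0 (not_le.2 h1)

/-! ### Hausdorff measure of spherical caps -/

lemma norm_normalize_sub_le {E : Type*} [NormedAddCommGroup E] [InnerProductSpace ℝ E]
    {v w : E} (hv : 1 ≤ ‖v‖) (hw : 1 ≤ ‖w‖) :
    ‖‖v‖⁻¹ • v - ‖w‖⁻¹ • w‖ ≤ 2 * ‖v - w‖ := by
  have hv0 : 0 < ‖v‖ := by linarith
  have hw0 : 0 < ‖w‖ := by linarith
  have hid : ‖v‖⁻¹ • v - ‖w‖⁻¹ • w = ‖v‖⁻¹ • ((v - w) + ((‖w‖ - ‖v‖) * ‖w‖⁻¹) • w) := by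
    rw [smul_add, smul_sub, smul_smul]
    have : ‖v‖⁻¹ * ((‖w‖ - ‖v‖) * ‖w‖⁻¹) = ‖v‖⁻¹ - ‖w‖⁻¹ := by field_simp
    rw [this, sub_smul]; abel
  rw [hid, norm_smul, norm_inv, norm_norm]
  have h1 : ‖((‖w‖ - ‖v‖) * ‖w‖⁻¹) • w‖ ≤ ‖v - w‖ := by
    rw [norm_smul, norm_mul, norm_inv, norm_norm, mul_assoc, inv_mul_cancel₀ hw0.ne', mul_one,
      norm_sub_rev v w]
    exact abs_norm_sub_norm_le w v
  have h2 := norm_add_le (v - w) (((‖w‖ - ‖v‖) * ‖w‖⁻¹) • w)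
  calc ‖v‖⁻¹ * ‖(v - w) + ((‖w‖ - ‖v‖) * ‖w‖⁻¹) • w‖
      ≤ 1 * ‖(v - w) + ((‖w‖ - ‖v‖) * ‖w‖⁻¹) • w‖ := by
        gcongr; exact inv_le_one_of_one_le₀ hv
    _ ≤ 2 * ‖v - w‖ := by linarith

/-- An isometric parametrization of the hyperplane orthogonal to `e`. -/
lemma exists_tangent_isometry {n : ℕ} {e : Euc n} (he : ‖e‖ = 1) :
    ∃ i : EuclideanSpace ℝ (Fin n) →ₗᵢ[ℝ] Euc n, (∀ p, ⟪e, i p⟫ = 0) ∧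
      ∀ v, ⟪e, v⟫ = 0 → ∃ p, i p = v := by
  have : Fact (Module.finrank ℝ (Euc n) = n + 1) := ⟨by simp⟩
  have he0 : e ≠ 0 := by intro h; simp [h] at he
  let b := OrthonormalBasis.fromOrthogonalSpanSingleton (𝕜 := ℝ) n he0
  refine ⟨(Submodule.subtypeₗᵢ _).comp b.repr.symm.toLinearIsometry, ?_, ?_⟩
  · intro p
    exact Submodule.mem_orthogonal_singleton_iff_inner_right.1 (b.repr.symm p).2
  · intro v hv
    refine ⟨b.repr ⟨v, Submodule.mem_orthogonal_singleton_iff_inner_right.2 hv⟩, ?_⟩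
    simp

/-- The cap is a Lipschitz image of a ball of the tangent hyperplane under the central
projection. -/
lemma cap_measure_le (n : ℕ) : ∃ C : ℝ, 0 ≤ C ∧ ∀ e : Euc n, ‖e‖ = 1 → ∀ r : ℝ, 0 < r → r ≤ 1 →
    sphereMeasure n (closedBall e r) ≤ ENNReal.ofReal (C * r ^ n) := by
  have hhaar : (μH[(n : ℝ)] : Measure (EuclideanSpace ℝ (Fin n))).IsAddHaarMeasure := by
    have := isAddHaarMeasure_hausdorffMeasure (E := EuclideanSpace ℝ (Fin n))
    simpa using this
  set M : ℝ≥0∞ := (μH[(n : ℝ)] : Measure (EuclideanSpace ℝ (Fin n))) (ball 0 1) with hM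
  have hMfin : M ≠ ⊤ := measure_ball_lt_top.ne
  refine ⟨4 ^ n * M.toReal, by positivity, ?_⟩
  intro e he r hr hr1
  obtain ⟨i, hi0, hi⟩ := exists_tangent_isometry he
  let f : EuclideanSpace ℝ (Fin n) → Euc n := fun p => ‖e + i p‖⁻¹ • (e + i p)
  have hnorm : ∀ p, 1 ≤ ‖e + i p‖ := by
    intro p
    have : ‖e + i p‖ ^ 2 = 1 + ‖i p‖ ^ 2 := by
      rw [norm_add_sq_real, hi0, he]; ring
    nlinarith [norm_nonneg (e + i p), sq_nonneg ‖i p‖]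
  have hlip : LipschitzWith 2 f := by
    refine LipschitzWith.of_dist_le_mul fun p q => ?_
    rw [dist_eq_norm, dist_eq_norm]
    refine (norm_normalize_sub_le (hnorm p) (hnorm q)).trans ?_
    rw [add_sub_add_left_eq_sub, ← map_sub, i.norm_map]
    simp
  have hsub : closedBall e r ∩ unitSphere n ⊆ f '' closedBall 0 (2 * r) := by
    rintro x ⟨hx, hxS⟩
    have hx1 : ‖x‖ = 1 := by simpa [unitSphere] using hxS
    have hxe : ‖x - e‖ ≤ r := by simpa [dist_eq_norm] using hx
    have hsq : ‖x - e‖ ^ 2 = 2 - 2 * ⟪e, x⟫ := by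
      rw [norm_sub_sq_real, hx1, he, real_inner_comm]; ring
    set a : ℝ := ⟪e, x⟫ with ha
    have hah : 1 / 2 ≤ a := by nlinarith [norm_nonneg (x - e)]
    have ha0 : 0 < a := by linarith
    have hee : ⟪e, e⟫ = (1 : ℝ) := by rw [real_inner_self_eq_norm_sq, he]; norm_num
    have hperp : ⟪e, a⁻¹ • x - e⟫ = (0 : ℝ) := by
      rw [inner_sub_right, inner_smul_right, ← ha, hee, inv_mul_cancel₀ ha0.ne', sub_self]
    obtain ⟨p, hp⟩ := hi _ hperp
    refine ⟨p, ?_, ?_⟩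
    · rw [mem_closedBall_zero_iff, ← i.norm_map, hp]
      have hax : a • (a⁻¹ • x - e) = x - a • e := by
        rw [smul_sub, smul_smul, mul_inv_cancel₀ ha0.ne', one_smul]
      have h2 : a * ‖a⁻¹ • x - e‖ = ‖x - a • e‖ := by
        rw [← hax, norm_smul, Real.norm_of_nonneg ha0.le]
      have h3 : ‖x - a • e‖ ^ 2 = 1 - a ^ 2 := by
        rw [norm_sub_sq_real, hx1, norm_smul, he, inner_smul_right, real_inner_comm, ← ha,
          Real.norm_of_nonneg ha0.le]; ring
      have h4 : ‖x - a • e‖ ≤ r := by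
        apply abs_le_of_sq_le_sq' _ hr.le |>.2
        nlinarith [norm_nonneg (x - e), sq_nonneg (1 - a)]
      nlinarith [norm_nonneg (a⁻¹ • x - e)]
    · simp only [f]
      rw [hp, add_sub_cancel, norm_smul, hx1, mul_one, norm_inv, Real.norm_of_nonneg ha0.le,
        inv_inv, smul_smul, mul_inv_cancel₀ ha0.ne', one_smul]
  calc sphereMeasure n (closedBall e r)
      = μH[(n : ℝ)] (closedBall e r ∩ unitSphere n) := by
        rw [sphereMeasure, Measure.restrict_apply measurableSet_closedBall]
    _ ≤ μH[(n : ℝ)] (f '' closedBall 0 (2 * r)) := measure_mono hsub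
    _ ≤ ((2 : ℝ≥0) : ℝ≥0∞) ^ (n : ℝ) * μH[(n : ℝ)] (closedBall 0 (2 * r)) :=
        hlip.hausdorffMeasure_image_le (by positivity) _
    _ = ENNReal.ofReal (4 ^ n * M.toReal * r ^ n) := by
        rw [Measure.addHaar_closedBall _ _ (by positivity), ← hM, ENNReal.rpow_natCast,
          finrank_euclideanSpace_fin]
        conv_lhs => rw [← ENNReal.ofReal_toReal hMfin]
        rw [show ((2 : ℝ≥0) : ℝ≥0∞) = ENNReal.ofReal 2 by simp,
          ← ENNReal.ofReal_pow (by positivity), ← ENNReal.ofReal_mul (by positivity),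
          ← ENNReal.ofReal_mul (by positivity)]
        congr 1
        rw [mul_pow, show (4 : ℝ) = 2 * 2 by norm_num, mul_pow]
        ring

/-- The cap contains the graph of `p ↦ √(1 - ‖p‖²)` over a ball of the hyperplane orthogonal to
`e`. -/
lemma le_cap_measure (n : ℕ) : ∃ c : ℝ, 0 < c ∧ ∀ e : Euc n, ‖e‖ = 1 → ∀ r : ℝ, 0 < r → r ≤ 1 →
    ENNReal.ofReal (c * r ^ n) ≤ sphereMeasure n (ball e r) := by
  have hhaar : (μH[(n : ℝ)] : Measure (EuclideanSpace ℝ (Fin n))).IsAddHaarMeasure := by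
    have := isAddHaarMeasure_hausdorffMeasure (E := EuclideanSpace ℝ (Fin n))
    simpa using this
  set M : ℝ≥0∞ := (μH[(n : ℝ)] : Measure (EuclideanSpace ℝ (Fin n))) (ball 0 1) with hM
  have hMfin : M ≠ ⊤ := measure_ball_lt_top.ne
  have hMpos : 0 < M := measure_ball_pos _ _ one_pos
  refine ⟨(1 / 2) ^ n * M.toReal, mul_pos (by positivity) (ENNReal.toReal_pos hMpos.ne' hMfin), ?_⟩
  intro e he r hr hr1
  obtain ⟨i, hi0, -⟩ := exists_tangent_isometry he
  have hee : ⟪e, e⟫ = (1 : ℝ) := by rw [real_inner_self_eq_norm_sq, he]; norm_num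
  let g : EuclideanSpace ℝ (Fin n) → Euc n := fun p => i p + √(1 - ‖p‖ ^ 2) • e
  -- The graph map does not decrease distances, being a section of an orthogonal projection.
  have hanti : AntilipschitzWith 1 g := by
    refine AntilipschitzWith.of_le_mul_dist fun p q => ?_
    rw [dist_eq_norm, dist_eq_norm, NNReal.coe_one, one_mul]
    set t : ℝ := √(1 - ‖p‖ ^ 2) - √(1 - ‖q‖ ^ 2)
    have hgg : g p - g q = i (p - q) + t • e := by
      simp only [g, t, map_sub, sub_smul]; abel
    have hsq : ‖g p - g q‖ ^ 2 = ‖p - q‖ ^ 2 + t ^ 2 := by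
      rw [hgg, norm_add_sq_real, inner_smul_right, real_inner_comm, hi0, i.norm_map, norm_smul, he,
        mul_one, Real.norm_eq_abs, sq_abs]; ring
    exact (abs_le_of_sq_le_sq' (by nlinarith [sq_nonneg t]) (norm_nonneg _)).2
  have hsub : g '' ball 0 (r / 2) ⊆ ball e r ∩ unitSphere n := by
    rintro _ ⟨p, hp, rfl⟩
    have hp' : ‖p‖ < r / 2 := by simpa using hp
    have hp0 := norm_nonneg p
    have h1 : 0 ≤ 1 - ‖p‖ ^ 2 := by nlinarith
    set t : ℝ := √(1 - ‖p‖ ^ 2) with ht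
    have ht2 : t ^ 2 = 1 - ‖p‖ ^ 2 := Real.sq_sqrt h1
    have ht0 : 0 ≤ t := Real.sqrt_nonneg _
    have ht1 : t ≤ 1 := by nlinarith [sq_nonneg ‖p‖]
    have hn2 : ∀ a : ℝ, ‖i p + a • e‖ ^ 2 = ‖p‖ ^ 2 + a ^ 2 := by
      intro a
      rw [norm_add_sq_real, inner_smul_right, real_inner_comm, hi0, i.norm_map, norm_smul, he,
        mul_one, Real.norm_eq_abs, sq_abs]; ring
    constructor
    · rw [mem_ball, dist_eq_norm]
      have : g p - e = i p + (t - 1) • e := by simp only [g, sub_smul, one_smul]; abel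
      rw [this]
      apply lt_of_pow_lt_pow_left₀ 2 hr.le
      rw [hn2]
      nlinarith
    · rw [unitSphere, mem_sphere_zero_iff_norm]
      have h2 : ‖g p‖ ^ 2 = 1 := by
        have : g p = i p + t • e := rfl
        rw [this, hn2, ht2]; ring
      nlinarith [norm_nonneg (g p)]
  calc ENNReal.ofReal ((1 / 2) ^ n * M.toReal * r ^ n)
      = μH[(n : ℝ)] (ball (0 : EuclideanSpace ℝ (Fin n)) (r / 2)) := by
        rw [Measure.addHaar_ball_of_pos _ _ (by positivity), ← hM, finrank_euclideanSpace_fin]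
        conv_rhs => rw [← ENNReal.ofReal_toReal hMfin]
        rw [← ENNReal.ofReal_mul (by positivity)]
        congr 1
        rw [div_pow, div_pow]; ring
    _ ≤ μH[(n : ℝ)] (g '' ball 0 (r / 2)) := by
        simpa using hanti.le_hausdorffMeasure_image (d := (n : ℝ)) (by positivity) (ball 0 (r / 2))
    _ ≤ μH[(n : ℝ)] (ball e r ∩ unitSphere n) := measure_mono hsub
    _ = sphereMeasure n (ball e r) := by
        rw [sphereMeasure, Measure.restrict_apply measurableSet_ball]

/-! ### Arcs over chords of the sphere -/

section Arc

variable {E : Type*} [NormedAddCommGroup E] [InnerProductSpace ℝ E]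

/-- The affine parametrization of the segment from `y₀` to `y₁`. -/
def chordPoint (y₀ y₁ : E) (θ : ℝ) : E := (1 - θ) • y₀ + θ • y₁

/-- The distance to move from the chord point in the direction `e` to reach the unit sphere: the
nonnegative root of `k² + 2 ⟪e, z⟫ k = 1 - ‖z‖²`, where `z` is the chord point and
`1 - ‖z‖² = θ (1 - θ) ‖y₁ - y₀‖²` for `y₀, y₁` on the sphere. -/
def arcLift (e y₀ y₁ : E) (θ : ℝ) : ℝ :=
  √(⟪e, chordPoint y₀ y₁ θ⟫ ^ 2 + θ * (1 - θ) * ‖y₁ - y₀‖ ^ 2) - ⟪e, chordPoint y₀ y₁ θ⟫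

/-- The arc on the unit sphere lying over the chord of `y₀` and `y₁` in the direction `e`. It joins
`y₀` to `y₁` if these lie in the upper half space `⟪e, ·⟫ ≥ 0`. -/
def arcPoint (e y₀ y₁ : E) (θ : ℝ) : E := chordPoint y₀ y₁ θ + arcLift e y₀ y₁ θ • e

lemma continuous_arcPoint (e y₀ y₁ : E) : Continuous (arcPoint e y₀ y₁) := by
  unfold arcPoint arcLift chordPoint
  fun_prop

lemma inner_chordPoint (e y₀ y₁ : E) (θ : ℝ) :
    ⟪e, chordPoint y₀ y₁ θ⟫ = (1 - θ) * ⟪e, y₀⟫ + θ * ⟪e, y₁⟫ := by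
  rw [chordPoint, inner_add_right, inner_smul_right, inner_smul_right]

lemma norm_chordPoint_sq {y₀ y₁ : E} (h₀ : ‖y₀‖ = 1) (h₁ : ‖y₁‖ = 1) (θ : ℝ) :
    ‖chordPoint y₀ y₁ θ‖ ^ 2 = 1 - θ * (1 - θ) * ‖y₁ - y₀‖ ^ 2 := by
  rw [chordPoint, norm_add_sq_real, norm_sub_sq_real, norm_smul, norm_smul, inner_smul_left,
    inner_smul_right, h₀, h₁, mul_one, mul_one, Real.norm_eq_abs, Real.norm_eq_abs, sq_abs, sq_abs,
    real_inner_comm y₁ y₀]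
  simp only [conj_trivial]
  ring

lemma norm_arcPoint {e y₀ y₁ : E} (he : ‖e‖ = 1) (h₀ : ‖y₀‖ = 1) (h₁ : ‖y₁‖ = 1)
    {θ : ℝ} (hθ₀ : 0 ≤ θ) (hθ₁ : θ ≤ 1) : ‖arcPoint e y₀ y₁ θ‖ = 1 := by
  have hd : 0 ≤ θ * (1 - θ) * ‖y₁ - y₀‖ ^ 2 := by
    have : 0 ≤ 1 - θ := by linarith
    positivity
  have h : ‖arcPoint e y₀ y₁ θ‖ ^ 2 = 1 := by
    rw [arcPoint, norm_add_sq_real, norm_chordPoint_sq h₀ h₁, inner_smul_right, norm_smul, he,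
      real_inner_comm, mul_one, Real.norm_eq_abs, sq_abs, arcLift]
    set b : ℝ := ⟪e, chordPoint y₀ y₁ θ⟫
    set d : ℝ := θ * (1 - θ) * ‖y₁ - y₀‖ ^ 2
    have := Real.sq_sqrt (show 0 ≤ b ^ 2 + d by positivity)
    linear_combination this
  nlinarith [norm_nonneg (arcPoint e y₀ y₁ θ)]

/-- Quantitative strict convexity of the sphere: over its middle half, the arc stays away from the
chord. -/
lemma le_arcLift {e y₀ y₁ : E} (he : ‖e‖ = 1) (h₀ : ‖y₀‖ = 1) (h₁ : ‖y₁‖ = 1)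
    {θ : ℝ} (hθ₀ : 1 / 4 ≤ θ) (hθ₁ : θ ≤ 3 / 4) :
    ‖y₁ - y₀‖ ^ 2 / 16 ≤ arcLift e y₀ y₁ θ := by
  have hb : ⟪e, chordPoint y₀ y₁ θ⟫ ≤ (1 : ℝ) := by
    have hb0 : ⟪e, y₀⟫ ≤ (1 : ℝ) := (real_inner_le_norm _ _).trans (by rw [he, h₀]; norm_num)
    have hb1 : ⟪e, y₁⟫ ≤ (1 : ℝ) := (real_inner_le_norm _ _).trans (by rw [he, h₁]; norm_num)
    rw [inner_chordPoint]; nlinarith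
  have hb' : (-1 : ℝ) ≤ ⟪e, chordPoint y₀ y₁ θ⟫ := by
    have hb0 : (-1 : ℝ) ≤ ⟪e, y₀⟫ := by
      have := neg_le_of_abs_le (abs_real_inner_le_norm e y₀); rw [he, h₀] at this; linarith
    have hb1 : (-1 : ℝ) ≤ ⟪e, y₁⟫ := by
      have := neg_le_of_abs_le (abs_real_inner_le_norm e y₁); rw [he, h₁] at this; linarith
    rw [inner_chordPoint]; nlinarith
  have hD : ‖y₁ - y₀‖ ≤ 2 := (norm_sub_le _ _).trans (by rw [h₀, h₁]; norm_num)
  have hD0 := norm_nonneg (y₁ - y₀)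
  rw [arcLift]
  set b : ℝ := ⟪e, chordPoint y₀ y₁ θ⟫
  set d : ℝ := θ * (1 - θ) * ‖y₁ - y₀‖ ^ 2 with hd
  have hq : 3 / 16 ≤ θ * (1 - θ) := by nlinarith
  have hq' : θ * (1 - θ) ≤ 1 / 4 := by nlinarith [sq_nonneg (θ - 1 / 2)]
  have hd1 : 3 / 16 * ‖y₁ - y₀‖ ^ 2 ≤ d := by rw [hd]; gcongr
  have hd0 : 0 ≤ d := by nlinarith [sq_nonneg ‖y₁ - y₀‖]
  have hd2 : d ≤ 1 := by
    have : ‖y₁ - y₀‖ ^ 2 ≤ 4 := by nlinarith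
    nlinarith
  have hs2 := Real.sq_sqrt (show 0 ≤ b ^ 2 + d by positivity)
  have hs0 := Real.sqrt_nonneg (b ^ 2 + d)
  set s := √(b ^ 2 + d)
  have hsb : b ≤ s := by
    apply Real.le_sqrt_of_sq_le; linarith
  have hs3 : s ≤ 2 := by nlinarith
  nlinarith

/-- The middle half of the arc is not much shorter than the chord. Without the
sign hypotheses the arc can collapse, as it does over a chord parallel to `e`. -/
lemma le_norm_arcPoint_sub {e y₀ y₁ : E} (he : ‖e‖ = 1)
    (hy₀ : 0 ≤ ⟪e, y₀⟫) (hy₁ : 0 ≤ ⟪e, y₁⟫) :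
    ‖y₁ - y₀‖ / 10 ≤ ‖arcPoint e y₀ y₁ (3 / 4) - arcPoint e y₀ y₁ (1 / 4)‖ := by
  set D := ‖y₁ - y₀‖ with hD
  have hD0 : 0 ≤ D := norm_nonneg _
  set k₃ := arcLift e y₀ y₁ (3 / 4) with hk3
  set k₁ := arcLift e y₀ y₁ (1 / 4) with hk1
  have hdiff : arcPoint e y₀ y₁ (3 / 4) - arcPoint e y₀ y₁ (1 / 4)
      = (1 / 2 : ℝ) • (y₁ - y₀) + (k₃ - k₁) • e := by
    simp only [arcPoint, chordPoint, ← hk3, ← hk1]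
    module
  set g : ℝ := ⟪e, y₁⟫ - ⟪e, y₀⟫ with hg
  set a : ℝ := ⟪e, y₁⟫ + ⟪e, y₀⟫ with ha
  have hnorm : ‖arcPoint e y₀ y₁ (3 / 4) - arcPoint e y₀ y₁ (1 / 4)‖ ^ 2
      = (D ^ 2 - g ^ 2) / 4 + (g / 2 + (k₃ - k₁)) ^ 2 := by
    rw [hdiff, norm_add_sq_real, inner_smul_left, inner_smul_right, norm_smul, norm_smul, he,
      real_inner_comm, inner_sub_right, ← hD, ← hg, mul_one, Real.norm_eq_abs, Real.norm_eq_abs,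
      mul_pow, sq_abs, sq_abs]
    simp only [conj_trivial]
    ring
  have hgD : g ^ 2 ≤ D ^ 2 := by
    have : |g| ≤ D := by
      rw [hg, ← inner_sub_right]
      simpa [he] using abs_real_inner_le_norm e (y₁ - y₀)
    exact sq_le_sq' (neg_le_of_abs_le this) (le_of_abs_le this)
  apply abs_le_of_sq_le_sq' _ (norm_nonneg _) |>.2
  rw [hnorm]
  rcases le_or_gt (g ^ 2) (D ^ 2 / 2) with hcase | hcase
  · nlinarith [sq_nonneg (g / 2 + (k₃ - k₁))]
  -- Here the heights over `e⊥` differ a lot. With `hᵢ` the heights of the two arc points,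
  -- `h₃² - h₁² = g a / 2` while `h₃ + h₁ ≤ a + D` and `D ≤ 2 a`.
  have hb3 : ⟪e, chordPoint y₀ y₁ (3 / 4)⟫ = a / 2 + g / 4 := by
    rw [inner_chordPoint, ha, hg]; ring
  have hb1 : ⟪e, chordPoint y₀ y₁ (1 / 4)⟫ = a / 2 - g / 4 := by
    rw [inner_chordPoint, ha, hg]; ring
  have hga : |g| ≤ a := by rw [abs_le]; constructor <;> linarith
  have hg1 := neg_abs_le g
  have hg2 := le_abs_self g
  have ha0 : 0 ≤ a := (abs_nonneg g).trans hga
  have hDa : D ≤ 2 * a := by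
    have : g ^ 2 ≤ a ^ 2 := by rw [← sq_abs]; gcongr
    nlinarith
  rw [arcLift, hb3, ← hD] at hk3
  rw [arcLift, hb1, ← hD] at hk1
  have p3 : 0 ≤ (a / 2 + g / 4) ^ 2 + 3 / 4 * (1 - 3 / 4) * D ^ 2 := by positivity
  have p1 : 0 ≤ (a / 2 - g / 4) ^ 2 + 1 / 4 * (1 - 1 / 4) * D ^ 2 := by positivity
  have s3 := Real.sq_sqrt p3
  have s1 := Real.sq_sqrt p1
  have n3 := Real.sqrt_nonneg ((a / 2 + g / 4) ^ 2 + 3 / 4 * (1 - 3 / 4) * D ^ 2)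
  have n1 := Real.sqrt_nonneg ((a / 2 - g / 4) ^ 2 + 1 / 4 * (1 - 1 / 4) * D ^ 2)
  have u3 : √((a / 2 + g / 4) ^ 2 + 3 / 4 * (1 - 3 / 4) * D ^ 2) ≤ a / 2 + g / 4 + D / 2 := by
    rw [Real.sqrt_le_left (by linarith)]
    linarith [sq_nonneg D, mul_nonneg hD0 (show 0 ≤ a / 2 + g / 4 by linarith)]
  have u1 : √((a / 2 - g / 4) ^ 2 + 1 / 4 * (1 - 1 / 4) * D ^ 2) ≤ a / 2 - g / 4 + D / 2 := by
    rw [Real.sqrt_le_left (by linarith)]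
    linarith [sq_nonneg D, mul_nonneg hD0 (show 0 ≤ a / 2 - g / 4 by linarith)]
  set t₃ := √((a / 2 + g / 4) ^ 2 + 3 / 4 * (1 - 3 / 4) * D ^ 2)
  set t₁ := √((a / 2 - g / 4) ^ 2 + 1 / 4 * (1 - 1 / 4) * D ^ 2)
  have hh : g / 2 + (k₃ - k₁) = t₃ - t₁ := by rw [hk3, hk1]; ring
  rw [hh]
  have hprod : (t₃ - t₁) * (t₃ + t₁) = g * a / 2 := by linear_combination s3 - s1
  have hsum : t₃ + t₁ ≤ 3 * a := by linarith
  have hapos : 0 < a := by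
    rcases ha0.lt_or_eq with h | h
    · exact h
    · have : D = 0 := by linarith
      rw [this] at hcase hgD; nlinarith
  have hsq : g ^ 2 / 36 ≤ (t₃ - t₁) ^ 2 := by
    have h1 : (t₃ - t₁) ^ 2 * (t₃ + t₁) ^ 2 = g ^ 2 * a ^ 2 / 4 := by
      rw [← mul_pow, hprod]; ring
    have h2 : (t₃ + t₁) ^ 2 ≤ 9 * a ^ 2 :=
      calc (t₃ + t₁) ^ 2 ≤ (3 * a) ^ 2 := by gcongr
        _ = 9 * a ^ 2 := by ring
    have h3 : g ^ 2 * a ^ 2 / 4 ≤ (t₃ - t₁) ^ 2 * (9 * a ^ 2) := by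
      rw [← h1]; gcongr
    have h4 : 0 < a ^ 2 := by positivity
    have h5 : g ^ 2 / 36 * a ^ 2 ≤ (t₃ - t₁) ^ 2 * a ^ 2 := by linarith
    exact le_of_mul_le_mul_right h5 h4
  linarith [sq_nonneg D]

/-- If `(x, y)` is monotone against `(x₀, y₀)` and `(x₁, y₁)`, and `y` is close to a point
of the arc that lies well above the chord, then `x` is close to the pole `e`. -/
lemma dist_lt_of_near_arc {e y₀ y₁ : E} (he : ‖e‖ = 1)
    {x₀ x₁ x y : E} {θ η r : ℝ}
    (hx₀ : ‖x₀‖ = 1) (hx₁ : ‖x₁‖ = 1) (hx : ‖x‖ = 1)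
    (hθ₀ : 0 ≤ θ) (hθ₁ : θ ≤ 1)
    (hlift : ‖y₁ - y₀‖ ^ 2 / 16 ≤ arcLift e y₀ y₁ θ)
    (hex₀ : ‖x₀ - e‖ ≤ 5 * ‖x₁ - x₀‖) (hex₁ : ‖x₁ - e‖ ≤ 5 * ‖x₁ - x₀‖)
    (hm₀ : 0 ≤ ⟪x - x₀, y - y₀⟫) (hm₁ : 0 ≤ ⟪x - x₁, y - y₁⟫)
    (hD : 0 < ‖y₁ - y₀‖)
    (hr : 0 < r) (hr2 : r ^ 2 * ‖y₁ - y₀‖ = 400 * ‖x₁ - x₀‖)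
    (hrx : 10 * ‖x₁ - x₀‖ ≤ r)
    (hη : η = ‖y₁ - y₀‖ ^ 2 * r / 128)
    (hy : ‖y - arcPoint e y₀ y₁ θ‖ < η) : ‖x - e‖ < r := by
  by_contra hcon
  push Not at hcon
  set δ := ‖x₁ - x₀‖ with hδ
  set D := ‖y₁ - y₀‖ with hDdef
  set k := arcLift e y₀ y₁ θ with hk
  set R := ‖x - e‖ with hR
  set xθ := chordPoint x₀ x₁ θ with hxθ
  have hδ0 : 0 ≤ δ := norm_nonneg _
  have hq' : θ * (1 - θ) ≤ 1 / 4 := by nlinarith [sq_nonneg (θ - 1 / 2)]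
  have hq0 : 0 ≤ θ * (1 - θ) := mul_nonneg hθ₀ (by linarith)
  have hsum : 0 ≤ ⟪x - xθ, y - arcPoint e y₀ y₁ θ⟫ + k * ⟪x - xθ, e⟫
      + θ * (1 - θ) * ⟪x₁ - x₀, y₁ - y₀⟫ := by
    have : ⟪x - xθ, y - arcPoint e y₀ y₁ θ⟫ + k * ⟪x - xθ, e⟫
      + θ * (1 - θ) * ⟪x₁ - x₀, y₁ - y₀⟫
      = (1 - θ) * ⟪x - x₀, y - y₀⟫ + θ * ⟪x - x₁, y - y₁⟫ := by
      simp only [hxθ, arcPoint, ← hk, chordPoint, inner_sub_left, inner_sub_right, inner_add_left,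
        inner_add_right, inner_smul_left, inner_smul_right, conj_trivial]
      ring
    rw [this]
    have : 0 ≤ 1 - θ := by linarith
    positivity
  -- It remains to see that `‖x - e‖ ≥ r` makes the sum in `hsum` negative: the middle term is at
  -- most `-3/128 D² R²`, and the other two are at most `3/256 D² R²` and `1/1600 D² R²`.
  have hcs : ⟪x₁ - x₀, y₁ - y₀⟫ ≤ δ * D := real_inner_le_norm _ _
  have hfar : ⟪x - xθ, e⟫ ≤ -R ^ 2 / 2 + (5 * δ) ^ 2 / 2 := by
    have i1 : ∀ v : E, ‖v‖ = 1 → ⟪v, e⟫ = 1 - ‖v - e‖ ^ 2 / 2 := by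
      intro v hv
      rw [norm_sub_sq_real, hv, he]; ring
    rw [hxθ, chordPoint, inner_sub_left, inner_add_left, inner_smul_left, inner_smul_left,
      i1 x hx, i1 x₀ hx₀, i1 x₁ hx₁]
    simp only [conj_trivial]
    have a0 : ‖x₀ - e‖ ^ 2 ≤ (5 * δ) ^ 2 := by gcongr
    have a1 : ‖x₁ - e‖ ^ 2 ≤ (5 * δ) ^ 2 := by gcongr
    nlinarith
  have hnear : ‖x - xθ‖ ≤ R + 5 * δ := by
    have : x - xθ = (x - e) - ((1 - θ) • (x₀ - e) + θ • (x₁ - e)) := by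
      rw [hxθ, chordPoint]; module
    rw [this]
    refine (norm_sub_le _ _).trans ?_
    gcongr
    refine (norm_add_le _ _).trans ?_
    rw [norm_smul, norm_smul, Real.norm_of_nonneg hθ₀, Real.norm_of_nonneg (by linarith)]
    nlinarith
  have hηpos : 0 < η := by rw [hη]; positivity
  have hin : ⟪x - xθ, y - arcPoint e y₀ y₁ θ⟫ ≤ (R + 5 * δ) * η := by
    refine (real_inner_le_norm _ _).trans ?_
    gcongr
  have hR0 : 0 < R := hr.trans_le hcon
  have h5 : 5 * δ ≤ R / 2 := by linarith
  have hfar' : ⟪x - xθ, e⟫ ≤ -(3 / 8) * R ^ 2 := by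
    have : (5 * δ) ^ 2 ≤ (R / 2) ^ 2 := by gcongr
    linarith
  have t1 : k * ⟪x - xθ, e⟫ ≤ -(3 / 128) * (D ^ 2 * R ^ 2) := by
    have hk0 : 0 ≤ k := le_trans (by positivity) hlift
    have : k * ⟪x - xθ, e⟫ ≤ k * (-(3 / 8) * R ^ 2) := by gcongr
    have : D ^ 2 / 16 * R ^ 2 ≤ k * R ^ 2 := by gcongr
    linarith
  have t2 : (R + 5 * δ) * η ≤ 3 / 256 * (D ^ 2 * R ^ 2) := by
    have : (R + 5 * δ) * η ≤ (3 / 2 * R) * (D ^ 2 * R / 128) := by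
      rw [hη]; gcongr; linarith
    linarith
  have t3 : θ * (1 - θ) * ⟪x₁ - x₀, y₁ - y₀⟫ ≤ 1 / 1600 * (D ^ 2 * R ^ 2) := by
    have b1 : θ * (1 - θ) * ⟪x₁ - x₀, y₁ - y₀⟫ ≤ 1 / 4 * (δ * D) := by
      calc θ * (1 - θ) * ⟪x₁ - x₀, y₁ - y₀⟫ ≤ θ * (1 - θ) * (δ * D) := by gcongr
        _ ≤ 1 / 4 * (δ * D) := by gcongr
    have b2 : r ^ 2 ≤ R ^ 2 := by gcongr
    have b3 : r ^ 2 * D ^ 2 ≤ R ^ 2 * D ^ 2 := by gcongr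
    have b4 : r ^ 2 * D ^ 2 = 400 * (δ * D) := by linear_combination D * hr2
    linarith
  have : 0 < D ^ 2 * R ^ 2 := by positivity
  linarith

end Arc

/-! ### The support of the plan and the outer map -/

lemma transportCost_ne_top {n : ℕ} {γ : Measure (Euc n × Euc n)} [IsProbabilityMeasure γ]
    (hS : ∀ p ∈ γ.support, p.1 ∈ unitSphere n ∧ p.2 ∈ unitSphere n) : transportCost n γ ≠ ⊤ := by
  have hle : transportCost n γ ≤ ∫⁻ _, ENNReal.ofReal 4 ∂γ := by
    refine lintegral_mono_ae ?_
    filter_upwards [Measure.support_mem_ae (μ := γ)] with p hp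
    apply ENNReal.ofReal_le_ofReal
    have h1 : ‖p.1‖ = 1 := by simpa [unitSphere] using (hS p hp).1
    have h2 : ‖p.2‖ = 1 := by simpa [unitSphere] using (hS p hp).2
    have h3 := norm_sub_le p.1 p.2
    rw [h1, h2] at h3
    nlinarith [norm_nonneg (p.1 - p.2)]
  refine ne_top_of_le_ne_top ?_ hle
  simp

lemma support_subset_sphere {n : ℕ} {μ ν : Measure (Euc n)} {γ : Measure (Euc n × Euc n)}
    (hsuit : SymmetricallySuitable n μ ν) (hcoup : IsCoupling n μ ν γ) :
    ∀ p ∈ γ.support, p.1 ∈ unitSphere n ∧ p.2 ∈ unitSphere n := by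
  obtain ⟨-, -, ε, hε0, hεtop, -, hμ, -, hν⟩ := hsuit
  obtain ⟨-, hfst, hsnd⟩ := hcoup
  have hclosed : IsClosed (unitSphere n) := isClosed_sphere
  have hσ : sphereMeasure n (unitSphere n)ᶜ = 0 := by
    rw [sphereMeasure, Measure.restrict_apply hclosed.measurableSet.compl]; simp
  have key : ∀ m : Measure (Euc n), m ≤ ε⁻¹ • sphereMeasure n → m (unitSphere n)ᶜ = 0 := by
    intro m hm
    refine le_antisymm ((hm _).trans ?_) zero_le
    rw [Measure.smul_apply, hσ]; simp
  have h1 := key μ hμ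
  have h2 := key ν hν
  rw [← hfst, Measure.map_apply measurable_fst hclosed.measurableSet.compl] at h1
  rw [← hsnd, Measure.map_apply measurable_snd hclosed.measurableSet.compl] at h2
  intro p hp
  constructor
  · by_contra hcon
    exact Measure.subset_compl_support_of_isOpen (hclosed.isOpen_compl.preimage continuous_fst) h1
      hcon hp
  · by_contra hcon
    exact Measure.subset_compl_support_of_isOpen (hclosed.isOpen_compl.preimage continuous_snd) h2
      hcon hp

/-- Every point of the sphere is the source of some pair in the support of the plan, because `μ`
charges every cap and the support is compact. -/
lemma exists_partner {n : ℕ} {μ ν : Measure (Euc n)} {γ : Measure (Euc n × Euc n)}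
    (hsuit : SymmetricallySuitable n μ ν) (hcoup : IsCoupling n μ ν γ)
    {x : Euc n} (hx : x ∈ unitSphere n) : ∃ y, (x, y) ∈ γ.support := by
  have hS := support_subset_sphere hsuit hcoup
  obtain ⟨-, -, ε, hε0, hεtop, hμ, -, -, -⟩ := hsuit
  obtain ⟨-, hfst, hsnd⟩ := hcoup
  have hcpt : IsCompact (γ.support) := by
    have : IsCompact (unitSphere n ×ˢ unitSphere n) :=
      (isCompact_sphere _ _).prod (isCompact_sphere _ _)
    exact this.of_isClosed_subset Measure.isClosed_support fun p hp => hS p hp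
  have hclosed : IsClosed (Prod.fst '' γ.support) := (hcpt.image continuous_fst).isClosed
  by_contra hcon
  have hx' : x ∈ (Prod.fst '' γ.support)ᶜ := by
    rintro ⟨⟨a, b⟩, hp, rfl⟩
    exact hcon ⟨b, hp⟩
  obtain ⟨r, hr, hball⟩ := Metric.isOpen_iff.1 hclosed.isOpen_compl x hx'
  have hnull : μ (ball x r) = 0 := by
    rw [← hfst, Measure.map_apply measurable_fst measurableSet_ball]
    refine measure_mono_null ?_ (Measure.measure_compl_support (μ := γ))
    intro p hp hps
    exact hball hp ⟨p, hps, rfl⟩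
  obtain ⟨c, hc, hcap⟩ := le_cap_measure n
  have hx1 : ‖x‖ = 1 := by simpa [unitSphere] using hx
  have hr' : 0 < min r 1 := lt_min hr one_pos
  have hpos : 0 < sphereMeasure n (ball x r) := by
    refine lt_of_lt_of_le ?_ ((hcap x hx1 (min r 1) hr' (min_le_right _ _)).trans
      (measure_mono (ball_subset_ball (min_le_left _ _))))
    rw [ENNReal.ofReal_pos]; positivity
  have h0 := hμ (ball x r)
  rw [hnull, Measure.smul_apply, smul_eq_mul] at h0
  exact absurd h0 (not_le.2 (ENNReal.mul_pos hε0.ne' hpos.ne'))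

lemma support_subset_graphs {n : ℕ} {γ : Measure (Euc n × Euc n)} {tp tm : Euc n → Euc n}
    (hS : ∀ p ∈ γ.support, p.1 ∈ unitSphere n ∧ p.2 ∈ unitSphere n)
    (hGM : GangboMcCannMaps n γ tp tm) {p : Euc n × Euc n} (hp : p ∈ γ.support) :
    p.2 = tp p.1 ∨ p.2 = tm p.1 := by
  obtain ⟨htp, -, htm, -, hnull, -, -⟩ := hGM
  by_contra hcon
  push Not at hcon
  have hsep : ∀ t : Euc n → Euc n, ContinuousOn t (unitSphere n) → p.2 ≠ t p.1 →
      ∀ᶠ q in nhdsWithin p (Prod.fst ⁻¹' unitSphere n), q.2 ≠ t q.1 := by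
    intro t ht hne
    have h1 : ContinuousWithinAt (fun q : Euc n × Euc n => t q.1) (Prod.fst ⁻¹' unitSphere n) p :=
      ContinuousWithinAt.comp (ht p.1 (hS p hp).1) continuous_fst.continuousWithinAt
        (fun q hq => hq)
    have h2 : ContinuousWithinAt (fun q : Euc n × Euc n => q.2) (Prod.fst ⁻¹' unitSphere n) p :=
      continuous_snd.continuousWithinAt
    exact ((h2.sub h1).tendsto.eventually_ne (sub_ne_zero.2 hne)).mono fun _ => sub_ne_zero.1
  have hev := (hsep tp htp hcon.1).and (hsep tm htm hcon.2)
  rw [eventually_nhdsWithin_iff] at hev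
  have hpos := (Measure.mem_support_iff_forall p).1 hp _ hev
  refine hpos.ne' ?_
  refine measure_mono_null (t := {p : Euc n × Euc n | p.2 ≠ tp p.1 ∧ p.2 ≠ tm p.1} ∪ γ.supportᶜ)
    ?_ (measure_union_null hnull Measure.measure_compl_support)
  intro q hq
  by_cases hqs : q ∈ γ.support
  · exact Or.inl (hq (hS q hqs).1)
  · exact Or.inr hqs

/-- `(x, t⁺ x)` is monotone against the support of `γ`. If only `(x, t⁻ x)` is known to lie in the
support, `t⁺ x = t⁻ x + l x` with `l > 0` and `⟪x - q₁, x⟫ ≥ 0` on the sphere. -/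
lemma tPlus_monotone {n : ℕ} {μ ν : Measure (Euc n)} {γ : Measure (Euc n × Euc n)}
    {tp tm : Euc n → Euc n} (hsuit : SymmetricallySuitable n μ ν)
    (hopt : IsOptimalCoupling n μ ν γ) (hGM : GangboMcCannMaps n γ tp tm)
    {x : Euc n} (hx : x ∈ unitSphere n) {q : Euc n × Euc n} (hq : q ∈ γ.support) :
    0 ≤ ⟪x - q.1, tp x - q.2⟫ := by
  have hS := support_subset_sphere hsuit hopt.1
  have : IsProbabilityMeasure γ := hopt.1.1
  obtain ⟨y, hy⟩ := exists_partner hsuit hopt.1 hx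
  have hmon : 0 ≤ ⟪x - q.1, y - q.2⟫ :=
    monotone_of_optimal hopt (transportCost_ne_top hS) hy hq
  by_cases heq : tp x = tm x
  · rcases support_subset_graphs hS hGM hy with h | h
    · rwa [← show y = tp x from h]
    · rwa [heq, ← show y = tm x from h]
  · rcases support_subset_graphs hS hGM hy with h | h
    · rwa [← show y = tp x from h]
    · have h' : y = tm x := h
      obtain ⟨-, -, -, -, -, -, hbi⟩ := hGM
      obtain ⟨⟨l, hl, hlx⟩, -, -⟩ := hbi x hx heq
      have hx1 : ‖x‖ = 1 := by simpa [unitSphere] using hx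
      have hq1 : ‖q.1‖ = 1 := by simpa [unitSphere] using (hS q hq).1
      have hdec : tp x - q.2 = (y - q.2) + l • x := by rw [← hlx, h']; abel
      have hxx : 0 ≤ ⟪x - q.1, x⟫ := by
        rw [inner_sub_left, real_inner_self_eq_norm_sq, hx1]
        have := real_inner_le_norm q.1 x
        rw [hx1, hq1] at this
        linarith
      rw [hdec, inner_add_right, inner_smul_right]
      positivity

/-! ### Packing balls along a curve -/

/-- A lower bound for the measure of a tube around a curve. Points of the curve at the distances
`0, 2 η, 4 η, …` from `f a` are centres of disjoint balls of radius `η`. -/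
lemma packing_measure_le {X : Type*} [PseudoMetricSpace X] [MeasurableSpace X]
    [OpensMeasurableSpace X] (m : Measure X) {f : ℝ → X} (hf : Continuous f) {a b η : ℝ}
    (hab : a ≤ b) (hη : 0 < η) {w : ℝ≥0∞}
    (hw : ∀ θ ∈ Icc a b, w ≤ m (ball (f θ) η)) :
    ENNReal.ofReal (dist (f b) (f a) / (2 * η)) * w ≤ m (⋃ θ ∈ Icc a b, ball (f θ) η) := by
  set L := dist (f b) (f a) with hL
  have hL0 : 0 ≤ L := dist_nonneg
  set N := ⌊L / (2 * η)⌋₊ with hN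
  have hval : ∀ k : Fin (N + 1), ∃ θ ∈ Icc a b, dist (f θ) (f a) = 2 * η * (k : ℕ) := by
    intro k
    have hk : ((k : ℕ) : ℝ) ≤ L / (2 * η) :=
      (Nat.cast_le.2 (Nat.lt_succ_iff.1 k.2)).trans (Nat.floor_le (by positivity))
    have hmem : 2 * η * (k : ℕ) ∈ Icc (dist (f a) (f a)) (dist (f b) (f a)) := by
      rw [dist_self]
      refine ⟨by positivity, ?_⟩
      rw [le_div_iff₀ (by positivity)] at hk
      linarith
    obtain ⟨θ, hθ, hθ'⟩ := intermediate_value_Icc hab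
      ((hf.dist continuous_const).continuousOn (s := Icc a b)) hmem
    exact ⟨θ, hθ, hθ'⟩
  choose θ hθ hdist using hval
  have hdisj : Pairwise (Function.onFun Disjoint fun k => ball (f (θ k)) η) := by
    intro j k hjk
    apply ball_disjoint_ball
    have h1 : |dist (f (θ j)) (f a) - dist (f (θ k)) (f a)| ≤ dist (f (θ j)) (f (θ k)) :=
      abs_dist_sub_le _ _ _
    rw [hdist, hdist, ← mul_sub, abs_mul, abs_of_pos (by positivity : 0 < 2 * η)] at h1
    have h2 : (1 : ℝ) ≤ |((j : ℕ) : ℝ) - ((k : ℕ) : ℝ)| := by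
      have hne : ((j : ℕ) : ℤ) - ((k : ℕ) : ℤ) ≠ 0 := by
        intro h; apply hjk; ext; omega
      exact_mod_cast Int.one_le_abs hne
    nlinarith
  calc ENNReal.ofReal (L / (2 * η)) * w ≤ ((N + 1 : ℕ) : ℝ≥0∞) * w := by
        gcongr
        rw [← ENNReal.ofReal_natCast]
        apply ENNReal.ofReal_le_ofReal
        push_cast
        exact (Nat.lt_floor_add_one _).le
    _ = ∑ _k : Fin (N + 1), w := by simp
    _ ≤ ∑ k : Fin (N + 1), m (ball (f (θ k)) η) := Finset.sum_le_sum fun k _ => hw _ (hθ k)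
    _ = m (⋃ k, ball (f (θ k)) η) := by
        rw [measure_iUnion hdisj fun _ => measurableSet_ball, tsum_fintype]
    _ ≤ m (⋃ θ ∈ Icc a b, ball (f θ) η) := by
        refine measure_mono (iUnion_subset fun k => ?_)
        exact subset_biUnion_of_mem (u := fun θ => ball (f θ) η) (hθ k)

/-! ### The Hölder estimate -/

lemma suitable_upper {n : ℕ} {μ : Measure (Euc n)} [IsProbabilityMeasure μ] {ε : ℝ≥0∞}
    (hε0 : 0 < ε) (hμ : μ ≤ ε⁻¹ • sphereMeasure n) :
    ∃ C : ℝ, 0 < C ∧ ∀ e : Euc n, ‖e‖ = 1 → ∀ r : ℝ, 0 < r →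
      μ (closedBall e r) ≤ ENNReal.ofReal (C * r ^ n) := by
  obtain ⟨C, hC0, hC⟩ := cap_measure_le n
  have hεi : ε⁻¹ ≠ ⊤ := ENNReal.inv_ne_top.2 hε0.ne'
  refine ⟨ε⁻¹.toReal * C + 1, by positivity, ?_⟩
  intro e he r hr
  rcases le_or_gt r 1 with hr1 | hr1
  · calc μ (closedBall e r) ≤ ε⁻¹ * sphereMeasure n (closedBall e r) := hμ _
      _ ≤ ENNReal.ofReal ε⁻¹.toReal * ENNReal.ofReal (C * r ^ n) := by
          rw [ENNReal.ofReal_toReal hεi]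
          gcongr
          exact hC e he r hr hr1
      _ = ENNReal.ofReal (ε⁻¹.toReal * (C * r ^ n)) := by
          rw [ENNReal.ofReal_mul ENNReal.toReal_nonneg]
      _ ≤ ENNReal.ofReal ((ε⁻¹.toReal * C + 1) * r ^ n) := by
          apply ENNReal.ofReal_le_ofReal
          have : 0 < r ^ n := by positivity
          linarith
  · refine prob_le_one.trans ?_
    rw [← ENNReal.ofReal_one]
    apply ENNReal.ofReal_le_ofReal
    have h1 : 1 ≤ r ^ n := one_le_pow₀ hr1.le
    have h2 : 0 ≤ ε⁻¹.toReal * C := by positivity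
    nlinarith

lemma suitable_lower {n : ℕ} {ν : Measure (Euc n)} {ε : ℝ≥0∞}
    (hε0 : 0 < ε) (hεtop : ε ≠ ⊤) (hν : ε • sphereMeasure n ≤ ν) :
    ∃ c : ℝ, 0 < c ∧ ∀ y : Euc n, ‖y‖ = 1 → ∀ r : ℝ, 0 < r → r ≤ 1 →
      ENNReal.ofReal (c * r ^ n) ≤ ν (ball y r) := by
  obtain ⟨c, hc0, hc⟩ := le_cap_measure n
  refine ⟨ε.toReal * c, mul_pos (ENNReal.toReal_pos hε0.ne' hεtop) hc0, ?_⟩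
  intro y hy r hr hr1
  calc ENNReal.ofReal (ε.toReal * c * r ^ n)
      = ε * ENNReal.ofReal (c * r ^ n) := by
        rw [mul_assoc, ENNReal.ofReal_mul ENNReal.toReal_nonneg, ENNReal.ofReal_toReal hεtop]
    _ ≤ ε * sphereMeasure n (ball y r) := by gcongr; exact hc y hy r hr hr1
    _ ≤ ν (ball y r) := hν _

/-- A pole `e` close to `x₀` and `x₁` for which both `y₀` and `y₁` lie in the upper half space: the
normalization of `x₀ + δ (y₀ + y₁)` with `δ = ‖x₁ - x₀‖`. -/
lemma exists_pole {E : Type*} [NormedAddCommGroup E] [InnerProductSpace ℝ E]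
    {x₀ x₁ y₀ y₁ : E} (hx₀ : ‖x₀‖ = 1) (h₀ : ‖y₀‖ = 1) (h₁ : ‖y₁‖ = 1)
    (hδ : ‖x₁ - x₀‖ ≤ 1 / 4) (hD : ‖y₁ - y₀‖ ≤ 1)
    (hp₀ : 0 ≤ ⟪x₀, y₀⟫) (hp₁ : 0 ≤ ⟪x₁, y₁⟫) :
    ∃ e : E, ‖e‖ = 1 ∧ 0 ≤ ⟪e, y₀⟫ ∧ 0 ≤ ⟪e, y₁⟫ ∧
      ‖x₀ - e‖ ≤ 5 * ‖x₁ - x₀‖ ∧ ‖x₁ - e‖ ≤ 5 * ‖x₁ - x₀‖ := by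
  set δ := ‖x₁ - x₀‖ with hδdef
  have hδ0 : 0 ≤ δ := norm_nonneg _
  set v : E := x₀ + δ • (y₀ + y₁) with hv
  have hyy : 0 ≤ ⟪y₀, y₁⟫ := by
    have := norm_sub_sq_real y₁ y₀
    rw [h₀, h₁, real_inner_comm] at this
    nlinarith [norm_nonneg (y₁ - y₀)]
  have hvx : ‖v - x₀‖ ≤ 2 * δ := by
    rw [hv, add_sub_cancel_left, norm_smul, Real.norm_of_nonneg hδ0]
    have := norm_add_le y₀ y₁
    rw [h₀, h₁] at this
    nlinarith
  have hv1 : |‖v‖ - 1| ≤ 2 * δ := by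
    rw [← hx₀]; exact (abs_norm_sub_norm_le v x₀).trans hvx
  have hvpos : 0 < ‖v‖ := by linarith [neg_le_of_abs_le hv1]
  have hi0 : 0 ≤ ⟪v, y₀⟫ := by
    rw [hv, inner_add_left, inner_smul_left, inner_add_left, real_inner_self_eq_norm_sq, h₀,
      real_inner_comm]
    simp only [conj_trivial]
    rw [real_inner_comm] at hp₀ hyy
    have : 0 ≤ δ * (1 ^ 2 + ⟪y₁, y₀⟫) := by positivity
    linarith
  have hi1 : 0 ≤ ⟪v, y₁⟫ := by
    have hx₀y : -δ ≤ ⟪x₀, y₁⟫ := by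
      have h := real_inner_le_norm (x₁ - x₀) y₁
      rw [h₁, inner_sub_left, mul_one] at h
      linarith
    rw [hv, inner_add_left, inner_smul_left, inner_add_left, real_inner_self_eq_norm_sq, h₁]
    simp only [conj_trivial]
    have : 0 ≤ δ * ⟪y₀, y₁⟫ := by positivity
    linarith
  have hev : ‖‖v‖⁻¹ • v - v‖ ≤ 2 * δ := by
    have : ‖v‖⁻¹ • v - v = (‖v‖⁻¹ - 1) • v := by rw [sub_smul, one_smul]
    rw [this, norm_smul, Real.norm_eq_abs]
    have h2 : |‖v‖⁻¹ - 1| * ‖v‖ = |‖v‖ - 1| := by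
      nth_rewrite 2 [← abs_of_pos hvpos]
      rw [← abs_mul, sub_mul, inv_mul_cancel₀ hvpos.ne', one_mul, abs_sub_comm]
    rw [h2]; exact hv1
  have hex0 : ‖x₀ - ‖v‖⁻¹ • v‖ ≤ 4 * δ := by
    rw [norm_sub_rev]
    have : ‖v‖⁻¹ • v - x₀ = (‖v‖⁻¹ • v - v) + (v - x₀) := by abel
    rw [this]
    exact (norm_add_le _ _).trans (by linarith)
  refine ⟨‖v‖⁻¹ • v, ?_, ?_, ?_, by linarith, ?_⟩
  · rw [norm_smul, norm_inv, norm_norm, inv_mul_cancel₀ hvpos.ne']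
  · rw [inner_smul_left]; simp only [conj_trivial]; positivity
  · rw [inner_smul_left]; simp only [conj_trivial]; positivity
  · have : x₁ - ‖v‖⁻¹ • v = (x₁ - x₀) + (x₀ - ‖v‖⁻¹ • v) := by abel
    rw [this]
    exact (norm_add_le _ _).trans (by linarith)

/-- The Hölder estimate in polynomial form, on the sphere of dimension `n = m + 1`, for which
`4 n - 1 = 4 m + 3`. -/
lemma pow_norm_tPlus_sub_le {m : ℕ} {μ ν : Measure (Euc (m + 1))}
    {γ : Measure (Euc (m + 1) × Euc (m + 1))} {tp tm : Euc (m + 1) → Euc (m + 1)}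
    (hsuit : SymmetricallySuitable (m + 1) μ ν)
    (hopt : IsOptimalCoupling (m + 1) μ ν γ) (hGM : GangboMcCannMaps (m + 1) γ tp tm) :
    ∃ C : ℝ, 0 ≤ C ∧ ∀ x₀ ∈ unitSphere (m + 1), ∀ x₁ ∈ unitSphere (m + 1),
      ‖x₁ - x₀‖ ≤ 1 / 4 → ‖tp x₁ - tp x₀‖ ≤ 1 → ‖x₁ - x₀‖ < ‖tp x₁ - tp x₀‖ →
      ‖tp x₁ - tp x₀‖ ^ (4 * m + 3) ≤ C * ‖x₁ - x₀‖ := by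
  have hS := support_subset_sphere hsuit hopt.1
  have hmono := fun x hx q hq => tPlus_monotone hsuit hopt hGM (x := x) hx (q := q) hq
  obtain ⟨hμp, hνp, ε, hε0, hεtop, -, hμ, hν, -⟩ := hsuit
  obtain ⟨⟨-, hfst, hsnd⟩, -⟩ := hopt
  obtain ⟨C, hC0, hC⟩ := suitable_upper hε0 hμ
  obtain ⟨c, hc0, hc⟩ := suitable_lower hε0 hεtop hν
  obtain ⟨-, hbij, -, -, -, hS₁, hS₂⟩ := hGM
  have hpos : ∀ x ∈ unitSphere (m + 1), 0 ≤ ⟪x, tp x⟫ := by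
    intro x hx
    by_cases h : tp x = tm x
    · exact hS₁ x hx h
    · exact (hS₂ x hx h).2.1.le
  have hnorm : ∀ x ∈ unitSphere (m + 1), ‖x‖ = 1 := fun x hx => by simpa [unitSphere] using hx
  set Q : ℝ := 20 * 128 ^ m * C / c with hQ
  refine ⟨400 * Q ^ 2, by positivity, ?_⟩
  intro x₀ hx₀ x₁ hx₁ hδ hD hlt
  have hy₀ := hnorm _ (hbij.mapsTo hx₀)
  have hy₁ := hnorm _ (hbij.mapsTo hx₁)
  obtain ⟨e, he, hey₀, hey₁, hex₀, hex₁⟩ := exists_pole (hnorm x₀ hx₀) hy₀ hy₁ hδ hD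
    (hpos x₀ hx₀) (hpos x₁ hx₁)
  have hδpos : 0 < ‖x₁ - x₀‖ := by
    rw [norm_pos_iff, sub_ne_zero]
    rintro rfl
    simp at hlt
  have hm₀ := hmono x₀ hx₀
  have hm₁ := hmono x₁ hx₁
  have hlift := fun θ h h' => le_arcLift he hy₀ hy₁ (θ := θ) h h'
  have hnarc := fun θ h h' => norm_arcPoint he hy₀ hy₁ (θ := θ) h h'
  have hlen := le_norm_arcPoint_sub he hey₀ hey₁
  set y₀ := tp x₀
  set y₁ := tp x₁
  set δ := ‖x₁ - x₀‖ with hδdef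
  set D := ‖y₁ - y₀‖ with hDdef
  have hDpos : 0 < D := hδpos.trans hlt
  set r : ℝ := 20 * √(δ / D) with hr
  have hsq : √(δ / D) ^ 2 = δ / D := Real.sq_sqrt (by positivity)
  have hsqpos : 0 < √(δ / D) := Real.sqrt_pos.2 (by positivity)
  have hsq1 : √(δ / D) ≤ 1 := by
    refine Real.sqrt_le_iff.2 ⟨by norm_num, ?_⟩
    rw [one_pow]
    exact (div_le_one hDpos).2 hlt.le
  have hrpos : 0 < r := by positivity
  have hr2 : r ^ 2 * D = 400 * δ := by
    rw [hr, mul_pow, hsq]; field_simp; norm_num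
  -- `δ D ≤ 1` gives `δ ≤ √(δ / D)`.
  have hrx : 10 * δ ≤ r := by
    have h1 : δ ≤ √(δ / D) := by
      apply Real.le_sqrt_of_sq_le
      rw [le_div_iff₀ hDpos]
      have : δ * D ≤ 1 := by nlinarith
      nlinarith
    linarith
  set η : ℝ := D ^ 2 * r / 128 with hη
  have hηpos : 0 < η := by positivity
  have hη1 : η ≤ 1 := by
    have : D ^ 2 ≤ 1 := by nlinarith
    have : D ^ 2 * r ≤ 1 * 20 := by gcongr; linarith
    linarith
  set Y : Set (Euc (m + 1)) := ⋃ θ ∈ Icc (1 / 4 : ℝ) (3 / 4), ball (arcPoint e y₀ y₁ θ) η with hY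
  have hYo : IsOpen Y := isOpen_biUnion fun _ _ => isOpen_ball
  -- All transport into the tube `Y` starts from the small cap around `e`.
  have hνμ : ν Y ≤ μ (closedBall e r) := by
    rw [← hsnd, ← hfst, Measure.map_apply measurable_snd hYo.measurableSet,
      Measure.map_apply measurable_fst measurableSet_closedBall]
    refine measure_mono_ae ?_
    filter_upwards [Measure.support_mem_ae (μ := γ)] with p hp hpY
    have hpY' : p.2 ∈ Y := hpY
    simp only [hY, mem_iUnion, exists_prop] at hpY'
    obtain ⟨θ, hθ, hpθ⟩ := hpY'
    have h0 := hm₀ p hp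
    have h1 := hm₁ p hp
    rw [← neg_sub p.1, ← neg_sub p.2, inner_neg_neg] at h0 h1
    have hlt := dist_lt_of_near_arc he (hnorm x₀ hx₀) (hnorm x₁ hx₁) (hnorm _ (hS p hp).1)
      (by linarith [hθ.1]) (by linarith [hθ.2]) (hlift θ hθ.1 hθ.2) hex₀ hex₁ h0 h1 hDpos
      hrpos hr2 hrx hη (by simpa [dist_eq_norm] using hpθ)
    change p.1 ∈ closedBall e r
    rw [mem_closedBall, dist_eq_norm]
    exact hlt.le
  have hpack := packing_measure_le ν (continuous_arcPoint e y₀ y₁) (a := 1 / 4) (b := 3 / 4)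
    (by norm_num) hηpos (w := ENNReal.ofReal (c * η ^ (m + 1))) fun θ hθ =>
      hc _ (hnarc θ (by linarith [hθ.1]) (by linarith [hθ.2])) η hηpos hη1
  have hfinal := (hpack.trans hνμ).trans (hC e he r hrpos)
  rw [← ENNReal.ofReal_mul (by positivity), ENNReal.ofReal_le_ofReal_iff (by positivity),
    dist_eq_norm] at hfinal
  have h1 : D / 10 / (2 * η) * (c * η ^ (m + 1)) ≤ C * r ^ (m + 1) :=
    le_trans (by gcongr) hfinal
  have h2 : D / 10 / (2 * η) * (c * η ^ (m + 1)) = c * D * η ^ m / 20 := by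
    rw [pow_succ]; field_simp; norm_num
  have h3 : c * D * η ^ m / 20 = (c * D ^ (2 * m + 1) / (20 * 128 ^ m)) * r ^ m := by
    rw [hη, div_pow, mul_pow, ← pow_mul, pow_succ]; field_simp
  rw [h2, h3] at h1
  have h1' : c * D ^ (2 * m + 1) / (20 * 128 ^ m) * r ^ m ≤ (C * r) * r ^ m :=
    h1.trans_eq (by ring)
  have h4 := le_of_mul_le_mul_right h1' (by positivity : 0 < r ^ m)
  have h5 : D ^ (2 * m + 1) ≤ Q * r := by
    rw [div_le_iff₀ (by positivity)] at h4
    rw [hQ, div_mul_eq_mul_div, le_div_iff₀ hc0]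
    linarith
  have h6 : (D ^ (2 * m + 1)) ^ 2 ≤ (Q * r) ^ 2 := by gcongr
  calc D ^ (4 * m + 3) = (D ^ (2 * m + 1)) ^ 2 * D := by ring
    _ ≤ (Q * r) ^ 2 * D := by gcongr
    _ = Q ^ 2 * (r ^ 2 * D) := by ring
    _ = 400 * Q ^ 2 * δ := by rw [hr2]; ring

/-- With `T₂ := t⁻(S₂)` the bivalent target set, the outer optimal map `t⁺`
is locally Hölder continuous with exponent `1/(4n−1)` on the set `(t⁺)⁻¹(T₂)`, i.e. on the
preimage under `t⁺` of the set where the image of `t⁺` is bivalent. -/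
theorem tPlus_locallyHolder_on_preimage_T2 (n : ℕ) (hn : 1 < n)
    (μ ν : Measure (Euc n)) (γ : Measure (Euc n × Euc n))
    (tp tm : Euc n → Euc n)
    (hsuit : SymmetricallySuitable n μ ν)
    (hopt : IsOptimalCoupling n μ ν γ)
    (hGM : GangboMcCannMaps n γ tp tm) :
    LocallyHolderOn n tp
      {x ∈ unitSphere n |
        tp x ∈ tm '' {x ∈ unitSphere n | tp x ≠ tm x}}
      (1 / (4 * (n : ℝ) - 1)) := by
  obtain ⟨m, rfl⟩ : ∃ m, n = m + 1 := ⟨n - 1, by omega⟩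
  obtain ⟨C, hC0, hC⟩ := pow_norm_tPlus_sub_le hsuit hopt hGM
  set α : ℝ := 1 / (4 * ((m + 1 : ℕ) : ℝ) - 1) with hα
  have hden : 4 * ((m + 1 : ℕ) : ℝ) - 1 = ((4 * m + 3 : ℕ) : ℝ) := by push_cast; ring
  have hα0 : 0 < α := by rw [hα, hden]; positivity
  have hα1 : α ≤ 1 := by
    rw [hα, hden, div_le_one (by positivity)]
    exact_mod_cast (by omega : 1 ≤ 4 * m + 3)
  intro x hx
  set A := {x ∈ unitSphere (m + 1) | tp x ∈ tm '' {x ∈ unitSphere (m + 1) | tp x ≠ tm x}}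
  have hcont : ContinuousWithinAt tp A x := (hGM.1 x hx.1).mono fun _ h => h.1
  refine ⟨A ∩ (ball x (1 / 8) ∩ tp ⁻¹' ball (tp x) (1 / 2)), ?_, inter_subset_left,
    C ^ α + 1, ?_⟩
  · refine Filter.inter_mem self_mem_nhdsWithin (Filter.inter_mem ?_ ?_)
    · exact mem_nhdsWithin_of_mem_nhds (ball_mem_nhds _ (by norm_num))
    · exact hcont (ball_mem_nhds _ (by norm_num))
  rintro x₀ ⟨hA₀, hb₀, ht₀⟩ x₁ ⟨hA₁, hb₁, ht₁⟩
  have hδ : ‖x₁ - x₀‖ ≤ 1 / 4 := by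
    rw [← dist_eq_norm]
    have := dist_triangle_right x₁ x₀ x
    rw [mem_ball] at hb₀ hb₁
    linarith
  have hD : ‖tp x₁ - tp x₀‖ ≤ 1 := by
    rw [← dist_eq_norm]
    have := dist_triangle_right (tp x₁) (tp x₀) (tp x)
    rw [mem_preimage, mem_ball] at ht₀ ht₁
    linarith
  have hδα : 0 ≤ ‖x₁ - x₀‖ ^ α := by positivity
  have hCα : 0 ≤ C ^ α := by positivity
  -- If `t⁺` does not expand the distance, the Lipschitz bound suffices because `‖x₁ - x₀‖ ≤ 1`.
  rcases le_or_gt ‖tp x₁ - tp x₀‖ ‖x₁ - x₀‖ with hle | hlt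
  · have h1 : ‖x₁ - x₀‖ ≤ ‖x₁ - x₀‖ ^ α := by
      have := Real.rpow_le_rpow_of_exponent_ge' (norm_nonneg (x₁ - x₀)) (by linarith) hα0.le hα1
      rwa [Real.rpow_one] at this
    nlinarith
  · have hpow := hC x₀ hA₀.1 x₁ hA₁.1 hδ hD hlt
    have h1 := Real.rpow_le_rpow (by positivity) hpow hα0.le
    have h2 : (‖tp x₁ - tp x₀‖ ^ (4 * m + 3)) ^ α = ‖tp x₁ - tp x₀‖ := by
      rw [hα, hden, one_div]
      exact Real.pow_rpow_inv_natCast (norm_nonneg _) (by omega)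
    rw [h2, Real.mul_rpow hC0 (norm_nonneg _)] at h1
    linarith
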